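/- arXiv:1602.01341 — 2 statements merged into one kernel-verified Lean document; each statement's English description precedes it below -/
import Mathlib

section
/- Let b ≥ 1 be an integer and s₀ > b/2. There exists a constant C(s₀) ≥ 1, and for each s ≥ s₀ a constant C(s) > 0, with the following property. Let Ψ be a matrix on ℤᵇ with C(s₀)|Ψ|_{s₀} ≤ 1/2 and set Φ := Id + Ψ. Then Φ is invertible, i.e. there is a matrix Φ^{-1} with ΦΦ^{-1} = Φ^{-1}Φ = Id (all matrix products defined by absolutely convergent sums), and |Φ^{-1}|_{s₀} ≤ 2 and, for every s ≥ s₀, |Φ^{-1} − Id|_s ≤ C(s)|Ψ|_s whenever |Ψ|_s < ∞. Moreover, if Φ_i = Id + Ψ_i, i = 1, 2, with C(s₀)|Ψ_i|_{s₀} ≤ 1/2, then |Φ₂^{-1} − Φ₁^{-1}|_s ≤ C(s)(|Ψ₂ − Ψ₁|_s + (|Ψ₁|_s + |Ψ₂|_s)|Ψ₂ − Ψ₁|_{s₀}). -/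
open scoped ENNReal

/-- `|i| := max_k |i_k|` for a multi-index `i ∈ ℤᵇ`. -/
def absIdx {b : ℕ} (i : Fin b → ℤ) : ℕ :=
  Finset.univ.sup fun k => (i k).natAbs

/-- `⟨i⟩ := max(1, |i|)`. -/
noncomputable def wt {b : ℕ} (i : Fin b → ℤ) : ℝ := max 1 (absIdx i : ℝ)

/-- Sobolev norm `‖u‖_s := (Σ_i ⟨i⟩^{2s} |u_i|²)^{1/2}` (valued in `ℝ≥0∞`). -/
noncomputable def sobNorm {b : ℕ} (u : (Fin b → ℤ) → ℂ) (s : ℝ) : ℝ≥0∞ :=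
  (∑' i : Fin b → ℤ, ENNReal.ofReal (wt i ^ (2 * s)) * (‖u i‖₊ : ℝ≥0∞) ^ 2) ^ (1/2 : ℝ)

/-- The `s`-decay norm of a bi-infinite matrix
`|A|_s := (Σ_h ⟨h⟩^{2s} (sup_{k-k'=h} |A_k^{k'}|)²)^{1/2}` (valued in `ℝ≥0∞`). -/
noncomputable def decayNorm {b : ℕ} (A : (Fin b → ℤ) → (Fin b → ℤ) → ℂ) (s : ℝ) : ℝ≥0∞ :=
  (∑' h : Fin b → ℤ, ENNReal.ofReal (wt h ^ (2 * s)) *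
      (⨆ k : Fin b → ℤ, (‖A k (k - h)‖₊ : ℝ≥0∞)) ^ 2) ^ (1/2 : ℝ)

/-- The identity matrix on `ℤᵇ`. -/
noncomputable def mId {b : ℕ} : (Fin b → ℤ) → (Fin b → ℤ) → ℂ :=
  fun k k' => if k = k' then 1 else 0

/-- `Ψ` is a two-sided inverse of `Φ`, with all the matrix products defined by
absolutely convergent sums. -/
def IsMatInverse {b : ℕ} (Φ Ψ : (Fin b → ℤ) → (Fin b → ℤ) → ℂ) : Prop :=
  (∀ k k' : Fin b → ℤ, Summable fun j : Fin b → ℤ => ‖Φ k j * Ψ j k'‖) ∧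
  (∀ k k' : Fin b → ℤ, Summable fun j : Fin b → ℤ => ‖Ψ k j * Φ j k'‖) ∧
  (∀ k k' : Fin b → ℤ, ∑' j : Fin b → ℤ, Φ k j * Ψ j k' = mId k k') ∧
  (∀ k k' : Fin b → ℤ, ∑' j : Fin b → ℤ, Ψ k j * Φ j k' = mId k k')


namespace DN

noncomputable def N2 {ι : Type*} (f : ι → ℝ≥0∞) : ℝ≥0∞ := (∑' i, f i ^ 2) ^ (1/2 : ℝ)

lemma N2_sq {ι : Type*} (f : ι → ℝ≥0∞) : N2 f ^ 2 = ∑' i, f i ^ 2 := by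
  unfold N2
  rw [← ENNReal.rpow_natCast, ← ENNReal.rpow_mul]
  norm_num

lemma le_of_sq_le {a c : ℝ≥0∞} (h : a ^ 2 ≤ c ^ 2) : a ≤ c := by
  by_contra hc
  push Not at hc
  exact absurd h (not_le.mpr (ENNReal.pow_lt_pow_left (by norm_num) hc))

lemma N2_mono {ι : Type*} {f g : ι → ℝ≥0∞} (h : ∀ i, f i ≤ g i) : N2 f ≤ N2 g := by
  apply le_of_sq_le
  rw [N2_sq, N2_sq]
  exact ENNReal.tsum_le_tsum fun i => pow_le_pow_left' (h i) 2

lemma N2_const_mul {ι : Type*} (c : ℝ≥0∞) (f : ι → ℝ≥0∞) :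
    N2 (fun i => c * f i) = c * N2 f := by
  unfold N2
  simp only [mul_pow]
  rw [ENNReal.tsum_mul_left, ENNReal.mul_rpow_of_nonneg _ _ (by norm_num),
    ← ENNReal.rpow_natCast, ← ENNReal.rpow_mul]
  norm_num

lemma N2_comp_equiv {ι κ : Type*} (e : ι ≃ κ) (f : κ → ℝ≥0∞) : N2 (fun i => f (e i)) = N2 f := by
  unfold N2
  rw [e.tsum_eq (fun i => f i ^ 2)]

lemma cs {ι : Type*} (f g : ι → ℝ≥0∞) : ∑' i, f i * g i ≤ N2 f * N2 g := by
  rw [ENNReal.tsum_eq_iSup_sum]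
  refine iSup_le fun s => ?_
  refine (ENNReal.inner_le_Lp_mul_Lq s f g (p := 2) (q := 2) Real.HolderConjugate.two_two).trans ?_
  unfold N2
  have h2 : ∀ x : ℝ≥0∞, x ^ (2:ℝ) = x ^ 2 := fun x => by
    rw [← ENNReal.rpow_natCast]; norm_num
  simp only [h2]
  gcongr
  · exact ENNReal.sum_le_tsum s
  · exact ENNReal.sum_le_tsum s

lemma N2_tsum {ι κ : Type*} (f : κ → ι → ℝ≥0∞) :
    N2 (fun i => ∑' n, f n i) ≤ ∑' n, N2 (f n) := by
  apply le_of_sq_le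
  rw [N2_sq]
  calc ∑' i, (∑' n, f n i) ^ 2 = ∑' i, ∑' n, ∑' m, f n i * f m i := by
        congr 1; ext i
        rw [sq, ← ENNReal.tsum_mul_right]
        congr 1; ext n
        rw [ENNReal.tsum_mul_left]
    _ = ∑' n, ∑' m, ∑' i, f n i * f m i := by
        rw [ENNReal.tsum_comm]
        congr 1; ext n
        rw [ENNReal.tsum_comm]
    _ ≤ ∑' n, ∑' m, N2 (f n) * N2 (f m) :=
        ENNReal.tsum_le_tsum fun n => ENNReal.tsum_le_tsum fun m => cs _ _
    _ = (∑' n, N2 (f n)) ^ 2 := by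
        rw [sq, ← ENNReal.tsum_mul_right]
        congr 1; ext n
        rw [ENNReal.tsum_mul_left]

lemma N2_add {ι : Type*} (f g : ι → ℝ≥0∞) : N2 (fun i => f i + g i) ≤ N2 f + N2 g := by
  have h := N2_tsum (fun (n : Fin 2) => if n = 0 then f else g)
  simpa [tsum_fintype, Fin.sum_univ_two] using h

lemma young {G : Type*} [AddCommGroup G] (a c : G → ℝ≥0∞) :
    N2 (fun h => ∑' j, a j * c (h - j)) ≤ (∑' j, a j) * N2 c := by
  refine (N2_tsum (fun j h => a j * c (h - j))).trans ?_
  rw [← ENNReal.tsum_mul_right]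
  refine ENNReal.tsum_le_tsum fun j => ?_
  rw [N2_const_mul]
  exact (congrArg (a j * ·) (N2_comp_equiv (Equiv.subRight j) c)).le

lemma conv_comm {G : Type*} [AddCommGroup G] (a c : G → ℝ≥0∞) (h : G) :
    ∑' j, a j * c (h - j) = ∑' j, c j * a (h - j) := by
  rw [← (Equiv.subLeft h).tsum_eq]
  congr 1; ext j
  simp [mul_comm]

lemma summable_of_enorm {ι : Type*} {f : ι → ℂ} (h : ∑' i, ‖f i‖ₑ ≠ ⊤) : Summable f := by
  have := ENNReal.tsum_coe_ne_top_iff_summable.1 h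
  exact this.of_nnnorm

variable {b : ℕ}

lemma wt_one_le (h : Fin b → ℤ) : 1 ≤ wt h := le_max_left _ _

lemma wt_pos (h : Fin b → ℤ) : 0 < wt h := lt_of_lt_of_le one_pos (wt_one_le h)

lemma wt_zero : wt (0 : Fin b → ℤ) = 1 := by simp [wt, absIdx]

lemma absIdx_add (h k : Fin b → ℤ) : absIdx (h + k) ≤ absIdx h + absIdx k := by
  unfold absIdx
  refine Finset.sup_le fun i _ => ?_
  have h1 := Finset.le_sup (f := fun k => (h k).natAbs) (Finset.mem_univ i)
  have h2 := Finset.le_sup (f := fun j => (k j).natAbs) (Finset.mem_univ i)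
  simp only [Pi.add_apply] at *
  exact (Int.natAbs_add_le _ _).trans (add_le_add h1 h2)

lemma wt_add (h k : Fin b → ℤ) : wt (h + k) ≤ wt h + wt k := by
  have := absIdx_add h k
  have h' : (absIdx (h + k) : ℝ) ≤ absIdx h + absIdx k := by exact_mod_cast this
  have h1 : (absIdx h : ℝ) ≤ wt h := le_max_right _ _
  have h2 : (absIdx k : ℝ) ≤ wt k := le_max_right _ _
  have := wt_one_le h
  have := wt_one_le k
  refine max_le ?_ ?_ <;> linarith

lemma real_weight (s : ℝ) (hs : 0 < s) : ∃ M : NNReal, ∀ x y : ℝ, 0 < x → 0 < y →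
    (x + y) ^ s ≤ M * x ^ s + 3/2 * y ^ s := by
  set d : ℝ := (3/2 : ℝ) ^ (1/s) - 1 with hd
  have hdpos : 0 < d := by
    have : (1:ℝ) < (3/2 : ℝ) ^ (1/s) := Real.one_lt_rpow (by norm_num) (by positivity)
    linarith
  have hd2 : (1 + d) ^ s = 3/2 := by
    have : 1 + d = (3/2 : ℝ) ^ (1/s) := by rw [hd]; ring
    rw [this, ← Real.rpow_mul (by norm_num)]
    rw [one_div, inv_mul_cancel₀ hs.ne', Real.rpow_one]
  refine ⟨⟨(1 + 1/d) ^ s, by positivity⟩, fun x y hx hy => ?_⟩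
  change (x + y) ^ s ≤ (1 + 1/d) ^ s * x ^ s + 3/2 * y ^ s
  by_cases h : x ≤ d * y
  · have : (x + y) ^ s ≤ ((1 + d) * y) ^ s :=
      Real.rpow_le_rpow (by positivity) (by linarith) hs.le
    rw [Real.mul_rpow (by positivity) hy.le, hd2] at this
    have : 0 ≤ (1 + 1/d) ^ s * x ^ s := by positivity
    linarith
  · push Not at h
    have h3 : y ≤ (1/d) * x := by
      rw [one_div, ← div_eq_inv_mul, le_div_iff₀ hdpos]; linarith
    have : (x + y) ^ s ≤ ((1 + 1/d) * x) ^ s :=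
      Real.rpow_le_rpow (by positivity) (by linarith) hs.le
    rw [Real.mul_rpow (by positivity) hx.le] at this
    have : 0 ≤ 3/2 * y ^ s := by positivity
    linarith

noncomputable def W (s : ℝ) (h : Fin b → ℤ) : ℝ≥0∞ := ENNReal.ofReal (wt h ^ s)

lemma W_weight (s : ℝ) : ∃ M : NNReal, 0 < s → ∀ h k : Fin b → ℤ,
    W s (h + k) ≤ M * W s h + ((3/2 : NNReal) : ℝ≥0∞) * W s k := by
  by_cases hs : 0 < s
  · obtain ⟨M, hM⟩ := real_weight s hs
    refine ⟨M, fun _ h k => ?_⟩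
    have h1 : wt (h + k) ^ s ≤ M * wt h ^ s + 3/2 * wt k ^ s :=
      (Real.rpow_le_rpow (wt_pos _).le (wt_add h k) hs.le).trans (hM _ _ (wt_pos h) (wt_pos k))
    have e32 : (3/2 : ℝ) = ((3/2 : NNReal) : ℝ) := by norm_num
    rw [e32] at h1
    have p1 : 0 ≤ wt h ^ s := Real.rpow_nonneg (wt_pos _).le _
    have p2 : 0 ≤ wt k ^ s := Real.rpow_nonneg (wt_pos _).le _
    unfold W
    refine (ENNReal.ofReal_le_ofReal h1).trans ?_
    rw [ENNReal.ofReal_add (by positivity) (by positivity), ENNReal.ofReal_mul (by positivity),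
      ENNReal.ofReal_mul (by positivity), ENNReal.ofReal_coe_nnreal, ENNReal.ofReal_coe_nnreal]
  · exact ⟨0, fun h => absurd h hs⟩

lemma W_sq (s : ℝ) (h : Fin b → ℤ) : W s h ^ 2 = ENNReal.ofReal (wt h ^ (2 * s)) := by
  unfold W
  rw [← ENNReal.ofReal_pow (Real.rpow_nonneg (wt_pos _).le _), mul_comm,
    Real.rpow_mul (wt_pos _).le]
  norm_num

lemma W_mono {s t : ℝ} (hst : s ≤ t) (h : Fin b → ℤ) : W s h ≤ W t h :=
  ENNReal.ofReal_le_ofReal (Real.rpow_le_rpow_of_exponent_le (wt_one_le h) hst)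

lemma W_neg_mul (s : ℝ) (h : Fin b → ℤ) : W (-s) h * W s h = 1 := by
  unfold W
  rw [← ENNReal.ofReal_mul (Real.rpow_nonneg (wt_pos _).le _), ← Real.rpow_add (wt_pos _)]
  simp

lemma W_zero_idx (s : ℝ) : W s (0 : Fin b → ℤ) = 1 := by
  simp [W, wt_zero]

lemma norm_cast_idx (h : Fin b → ℤ) : ‖(fun i => (h i : ℝ))‖ = absIdx h := by
  apply le_antisymm
  · rw [pi_norm_le_iff_of_nonneg (by positivity)]
    intro i
    have h1 := Finset.le_sup (f := fun k => (h k).natAbs) (Finset.mem_univ i)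
    rw [Real.norm_eq_abs, ← Int.cast_abs, ← Nat.cast_natAbs]
    exact_mod_cast h1
  · unfold absIdx
    rcases Nat.eq_zero_or_pos b with rfl | hb
    · simp
    have : Nonempty (Fin b) := ⟨⟨0, hb⟩⟩
    obtain ⟨i, -, hi⟩ := Finset.exists_mem_eq_sup (Finset.univ : Finset (Fin b))
      Finset.univ_nonempty (fun k => (h k).natAbs)
    rw [hi]
    have := norm_le_pi_norm (fun i => (h i : ℝ)) i
    rw [Real.norm_eq_abs, ← Int.cast_abs, ← Nat.cast_natAbs] at this
    exact_mod_cast this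

lemma summable_wt (r : ℝ) (hr : r < -(b:ℝ)) : Summable fun h : Fin b → ℤ => wt h ^ r := by
  let L := Submodule.span ℤ (Set.range (Pi.basisFun ℝ (Fin b)))
  have hfin : Module.finrank ℤ L = b := by
    rw [ZLattice.rank ℝ L]; simp
  have hs := ZLattice.summable_norm_rpow L r (by rw [hfin]; exact hr)
  have hmem : ∀ h : Fin b → ℤ, (fun i => (h i : ℝ)) ∈ L := by
    intro h
    refine ((Pi.basisFun ℝ (Fin b)).mem_span_iff_repr_mem ℤ _).mpr fun i => ?_
    simp
  have hinj : Function.Injective (fun h : Fin b → ℤ => (⟨_, hmem h⟩ : L)) := by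
    intro h k hk
    have := congrArg Subtype.val hk
    funext i
    have h2 : ((h i : ℤ) : ℝ) = (k i : ℤ) := congrFun this i
    exact_mod_cast h2
  have h1 := hs.comp_injective hinj
  have h2 : Summable fun h : Fin b → ℤ => if h = 0 then (1:ℝ) else 0 :=
    summable_of_hasFiniteSupport ((Set.finite_singleton (0 : Fin b → ℤ)).subset (by
      intro h; simp))
  refine Summable.of_nonneg_of_le (fun h => Real.rpow_nonneg (wt_pos _).le _) (fun h => ?_)
    (h1.add h2)
  have hn : ‖(⟨_, hmem h⟩ : L)‖ = absIdx h := norm_cast_idx h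
  simp only [Function.comp]
  rw [hn]
  by_cases h0 : h = 0
  · subst h0
    rw [wt_zero]
    have : (0:ℝ) ≤ (absIdx (0 : Fin b → ℤ) : ℝ) ^ r := by positivity
    simp [this]
  · have : 1 ≤ absIdx h := by
      by_contra hlt
      apply h0
      have hz : absIdx h = 0 := by omega
      funext i
      have h1 := Finset.le_sup (f := fun k => (h k).natAbs) (Finset.mem_univ i)
      have : (h i).natAbs ≤ absIdx h := h1
      simp only [Pi.zero_apply]
      omega
    have hw : wt h = absIdx h := max_eq_right (by exact_mod_cast this)
    rw [hw]; simp [h0]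

lemma exists_K (s : ℝ) (hs : (b:ℝ)/2 < s) : ∃ K : NNReal, N2 (W (b := b) (-s)) = K := by
  have h := summable_wt (b := b) (2 * (-s)) (by linarith)
  have h3 : ∑' i : Fin b → ℤ, W (-s) i ^ 2 ≠ ⊤ := by
    simp only [W_sq]
    exact h.tsum_ofReal_ne_top
  have : N2 (W (b := b) (-s)) ≠ ⊤ := by
    unfold N2
    exact ENNReal.rpow_ne_top_of_nonneg (by norm_num) h3
  exact ⟨_, (ENNReal.coe_toNNReal this).symm⟩

abbrev Mat (b : ℕ) := (Fin b → ℤ) → (Fin b → ℤ) → ℂ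

noncomputable def maj (A : Mat b) (h : Fin b → ℤ) : ℝ≥0∞ := ⨆ k, ‖A k (k - h)‖ₑ

noncomputable def n1 (A : Mat b) : ℝ≥0∞ := ∑' h, maj A h

noncomputable def dn (A : Mat b) (s : ℝ) : ℝ≥0∞ := N2 fun h => W s h * maj A h

lemma decayNorm_eq (A : Mat b) (s : ℝ) : decayNorm A s = dn A s := by
  unfold decayNorm dn N2
  simp only [mul_pow, W_sq]
  rfl

lemma entry_le (A : Mat b) (k k' : Fin b → ℤ) : ‖A k k'‖ₑ ≤ maj A (k - k') := by
  have := le_iSup (fun i => ‖A i (i - (k - k'))‖ₑ) k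
  simpa [maj] using this

lemma entry_le_n1 (A : Mat b) (k k' : Fin b → ℤ) : ‖A k k'‖ₑ ≤ n1 A :=
  (entry_le A k k').trans (ENNReal.le_tsum _)

lemma row_le (A : Mat b) (k : Fin b → ℤ) : ∑' j, ‖A k j‖ₑ ≤ n1 A := by
  unfold n1
  rw [← (Equiv.subLeft k).tsum_eq (maj A)]
  exact ENNReal.tsum_le_tsum fun j => entry_le A k j

lemma maj_neg (A : Mat b) : maj (-A) = maj A := by
  ext h; simp [maj]

lemma maj_add (A B : Mat b) (h : Fin b → ℤ) : maj (A + B) h ≤ maj A h + maj B h := by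
  refine iSup_le fun k => (enorm_add_le _ _).trans ?_
  exact add_le_add (le_iSup (fun k => ‖A k (k - h)‖ₑ) k) (le_iSup (fun k => ‖B k (k - h)‖ₑ) k)

lemma maj_tsum (A : ℕ → Mat b) (h : Fin b → ℤ) :
    maj (fun k k' => ∑' n, A n k k') h ≤ ∑' n, maj (A n) h := by
  refine iSup_le fun k => enorm_tsum_le_tsum_enorm.trans ?_
  exact ENNReal.tsum_le_tsum fun n => le_iSup (fun k => ‖A n k (k - h)‖ₑ) k

lemma n1_neg (A : Mat b) : n1 (-A) = n1 A := by simp [n1, maj_neg]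

lemma dn_neg (A : Mat b) (s : ℝ) : dn (-A) s = dn A s := by simp [dn, maj_neg]

lemma n1_add (A B : Mat b) : n1 (A + B) ≤ n1 A + n1 B := by
  unfold n1
  rw [← ENNReal.tsum_add]
  exact ENNReal.tsum_le_tsum fun h => maj_add A B h

lemma dn_add (A B : Mat b) (s : ℝ) : dn (A + B) s ≤ dn A s + dn B s := by
  refine le_trans (N2_mono fun h => ?_) (N2_add _ _)
  rw [← mul_add]
  gcongr
  exact maj_add A B h

lemma n1_tsum (A : ℕ → Mat b) : n1 (fun k k' => ∑' n, A n k k') ≤ ∑' n, n1 (A n) := by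
  unfold n1
  rw [ENNReal.tsum_comm]
  exact ENNReal.tsum_le_tsum fun h => maj_tsum A h

lemma dn_tsum (A : ℕ → Mat b) (s : ℝ) :
    dn (fun k k' => ∑' n, A n k k') s ≤ ∑' n, dn (A n) s := by
  refine le_trans (N2_mono fun h => ?_) (N2_tsum _)
  rw [ENNReal.tsum_mul_left]
  gcongr
  exact maj_tsum A h

lemma dn_mono (A : Mat b) {s t : ℝ} (hst : s ≤ t) : dn A s ≤ dn A t :=
  N2_mono fun h => mul_le_mul_left (W_mono hst h) _

lemma n1_le_dn (A : Mat b) (s : ℝ) : n1 A ≤ N2 (W (b := b) (-s)) * dn A s := by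
  refine le_trans (le_of_eq ?_) (cs _ _)
  unfold n1
  congr 1; ext h
  rw [← mul_assoc, W_neg_mul, one_mul]

lemma maj_id (h : Fin b → ℤ) : maj mId h ≤ if h = 0 then 1 else 0 := by
  refine iSup_le fun k => ?_
  unfold mId
  by_cases hh : h = 0
  · simp [hh]
  · have : ¬ (k = k - h) := by
      intro e
      exact hh (sub_eq_self.mp e.symm)
    simp [hh, this]

lemma n1_id : n1 (mId : Mat b) ≤ 1 := by
  refine (ENNReal.tsum_le_tsum maj_id).trans ?_
  simp

lemma dn_id (s : ℝ) : dn (mId : Mat b) s ≤ 1 := by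
  have h1 : ∀ h : Fin b → ℤ, W s h * maj mId h ≤ if h = 0 then 1 else 0 := by
    intro h
    by_cases hh : h = 0
    · have := maj_id h
      subst hh
      rw [W_zero_idx, one_mul]
      exact this
    · have := maj_id h
      simp only [hh, if_false, nonpos_iff_eq_zero] at this
      simp [this]
  refine (N2_mono h1).trans ?_
  simp [N2, ite_pow]

noncomputable def mul (A B : Mat b) : Mat b := fun k k' => ∑' j, A k j * B j k'

lemma maj_mul (A B : Mat b) (h : Fin b → ℤ) :
    maj (mul A B) h ≤ ∑' j, maj A j * maj B (h - j) := by
  refine iSup_le fun k => enorm_tsum_le_tsum_enorm.trans ?_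
  rw [← (Equiv.subLeft k).tsum_eq]
  refine ENNReal.tsum_le_tsum fun j => ?_
  rw [enorm_mul]
  refine mul_le_mul' ?_ ?_
  · exact (entry_le _ _ _).trans (by simp)
  · exact (entry_le _ _ _).trans (le_of_eq (by congr 1; simp))

lemma n1_mul (A B : Mat b) : n1 (mul A B) ≤ n1 A * n1 B := by
  refine (ENNReal.tsum_le_tsum (maj_mul A B)).trans ?_
  rw [ENNReal.tsum_comm]
  unfold n1
  rw [← ENNReal.tsum_mul_right]
  refine ENNReal.tsum_le_tsum fun j => ?_
  rw [ENNReal.tsum_mul_left]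
  exact (congrArg (maj A j * ·) ((Equiv.subRight j).tsum_eq (maj B))).le

lemma dn_mul (s : ℝ) (M : NNReal) (hM : ∀ h k : Fin b → ℤ,
    W s (h + k) ≤ M * W s h + ((3/2 : NNReal) : ℝ≥0∞) * W s k) (A B : Mat b) :
    dn (mul A B) s ≤ M * (dn A s * n1 B) + ((3/2 : NNReal) : ℝ≥0∞) * (n1 A * dn B s) := by
  set c : ℝ≥0∞ := ((3/2 : NNReal) : ℝ≥0∞)
  have h1 : ∀ h, W s h * maj (mul A B) h ≤
      M * (∑' j, (W s j * maj A j) * maj B (h - j)) +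
      c * ∑' j, maj A j * (W s (h - j) * maj B (h - j)) := by
    intro h
    calc W s h * maj (mul A B) h ≤ W s h * ∑' j, maj A j * maj B (h - j) := by
          gcongr; exact maj_mul A B h
      _ = ∑' j, W s h * (maj A j * maj B (h - j)) := by rw [ENNReal.tsum_mul_left]
      _ ≤ ∑' j, (M * W s j + c * W s (h - j)) * (maj A j * maj B (h - j)) := by
          refine ENNReal.tsum_le_tsum fun j => ?_
          gcongr
          have := hM j (h - j)
          simpa using this
      _ = ∑' j, (M * ((W s j * maj A j) * maj B (h - j)) +
            c * (maj A j * (W s (h - j) * maj B (h - j)))) := by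
          congr 1; ext j; ring
      _ = _ := by
          rw [ENNReal.tsum_add, ENNReal.tsum_mul_left, ENNReal.tsum_mul_left]
  refine (N2_mono h1).trans ((N2_add _ _).trans ?_)
  rw [N2_const_mul, N2_const_mul]
  gcongr
  · have := young (maj B) (fun j => W s j * maj A j)
    rw [mul_comm (dn A s)]
    refine le_trans (le_of_eq ?_) this
    congr 1; ext h
    exact conv_comm (fun j => W s j * maj A j) (maj B) h
  · exact young (maj A) (fun j => W s j * maj B j)

/-- absolute convergence of products -/
lemma mul_enorm (A B : Mat b) (k k' : Fin b → ℤ) :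
    ∑' j, ‖A k j * B j k'‖ₑ ≤ n1 A * n1 B := by
  calc ∑' j, ‖A k j * B j k'‖ₑ ≤ ∑' j, ‖A k j‖ₑ * n1 B := by
        refine ENNReal.tsum_le_tsum fun j => ?_
        rw [enorm_mul]
        gcongr
        exact entry_le_n1 _ _ _
    _ = (∑' j, ‖A k j‖ₑ) * n1 B := ENNReal.tsum_mul_right
    _ ≤ _ := by gcongr; exact row_le A k

lemma mul_summable {A B : Mat b} (hA : n1 A ≠ ⊤) (hB : n1 B ≠ ⊤) (k k' : Fin b → ℤ) :
    Summable fun j => A k j * B j k' :=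
  summable_of_enorm (ne_top_of_le_ne_top (ENNReal.mul_ne_top hA hB) (mul_enorm A B k k'))

lemma mul_assoc' {A B C : Mat b} (hA : n1 A ≠ ⊤) (hB : n1 B ≠ ⊤) (hC : n1 C ≠ ⊤) :
    mul (mul A B) C = mul A (mul B C) := by
  ext k k'
  simp only [mul]
  have hs : Summable (Function.uncurry fun j i => A k i * B i j * C j k') := by
    apply summable_of_enorm
    refine ne_top_of_le_ne_top (ENNReal.mul_ne_top hA (ENNReal.mul_ne_top hB hC)) ?_
    rw [ENNReal.tsum_prod', ENNReal.tsum_comm]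
    calc ∑' i, ∑' j, ‖A k i * B i j * C j k'‖ₑ ≤ ∑' i, ‖A k i‖ₑ * (n1 B * n1 C) := by
          refine ENNReal.tsum_le_tsum fun i => ?_
          simp only [mul_assoc, enorm_mul (A k i)]
          rw [ENNReal.tsum_mul_left]
          gcongr
          exact mul_enorm B C i k'
      _ = (∑' i, ‖A k i‖ₑ) * (n1 B * n1 C) := ENNReal.tsum_mul_right
      _ ≤ _ := by gcongr; exact row_le A k
  calc ∑' j, (∑' i, A k i * B i j) * C j k' = ∑' j, ∑' i, A k i * B i j * C j k' := by
        congr 1; ext j; rw [tsum_mul_right]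
    _ = ∑' i, ∑' j, A k i * B i j * C j k' := hs.tsum_comm.symm
    _ = _ := by
        congr 1; ext i; rw [← tsum_mul_left]
        congr 1; ext j; ring

lemma mul_add_left {A B C : Mat b} (hA : n1 A ≠ ⊤) (hB : n1 B ≠ ⊤) (hC : n1 C ≠ ⊤) :
    mul (A + B) C = mul A C + mul B C := by
  ext k k'
  simp only [mul, Pi.add_apply, add_mul]
  exact (mul_summable hA hC k k').tsum_add (mul_summable hB hC k k')

lemma mul_add_right {A B C : Mat b} (hA : n1 A ≠ ⊤) (hB : n1 B ≠ ⊤) (hC : n1 C ≠ ⊤) :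
    mul A (B + C) = mul A B + mul A C := by
  ext k k'
  simp only [mul, Pi.add_apply, mul_add]
  exact (mul_summable hA hB k k').tsum_add (mul_summable hA hC k k')

lemma mul_neg_left (A B : Mat b) : mul (-A) B = - mul A B := by
  ext k k'
  simp [mul, tsum_neg]

lemma mul_neg_right (A B : Mat b) : mul A (-B) = - mul A B := by
  ext k k'
  simp [mul, tsum_neg]

lemma id_mul (A : Mat b) : mul mId A = A := by
  ext k k'
  simp only [mul, mId, ite_mul, one_mul, zero_mul]
  rw [tsum_eq_single k]
  · simp
  · intro j hj; simp [Ne.symm hj]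

lemma mul_id (A : Mat b) : mul A mId = A := by
  ext k k'
  simp only [mul, mId, mul_ite, mul_one, mul_zero]
  rw [tsum_eq_single k']
  · simp
  · intro j hj; simp [hj]

noncomputable def P (A : Mat b) : ℕ → Mat b
  | 0 => mId
  | n + 1 => mul A (P A n)

noncomputable def S (A : Mat b) : Mat b := fun k k' => ∑' n, P A n k k'

lemma n1_P {A : Mat b} (hA : n1 A ≤ ((1/4 : NNReal) : ℝ≥0∞)) (n : ℕ) :
    n1 (P A n) ≤ (2⁻¹ : ℝ≥0∞) ^ n := by
  induction n with
  | zero => simpa [P] using n1_id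
  | succ n ih =>
    refine (n1_mul _ _).trans ?_
    rw [pow_succ']
    gcongr
    refine hA.trans ?_
    have : ((1/4 : NNReal) : ℝ≥0∞) ≤ ((2⁻¹ : NNReal) : ℝ≥0∞) := by
      rw [ENNReal.coe_le_coe, ← NNReal.coe_le_coe]; push_cast; norm_num
    simpa using this

lemma n1_P_ne {A : Mat b} (hA : n1 A ≤ ((1/4 : NNReal) : ℝ≥0∞)) (n : ℕ) : n1 (P A n) ≠ ⊤ :=
  ne_top_of_le_ne_top (by simp) (n1_P hA n)

lemma sum_n1_P {A : Mat b} (hA : n1 A ≤ ((1/4 : NNReal) : ℝ≥0∞)) : ∑' n, n1 (P A n) ≤ 2 :=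
  (ENNReal.tsum_le_tsum (n1_P hA)).trans ENNReal.tsum_geometric_two.le

lemma n1_S {A : Mat b} (hA : n1 A ≤ ((1/4 : NNReal) : ℝ≥0∞)) : n1 (S A) ≤ 2 :=
  (n1_tsum _).trans (sum_n1_P hA)

lemma P_summable {A : Mat b} (hA : n1 A ≤ ((1/4 : NNReal) : ℝ≥0∞)) (k k' : Fin b → ℤ) :
    Summable fun n => P A n k k' := by
  apply summable_of_enorm
  refine ne_top_of_le_ne_top (b := 2) (by simp) (le_trans ?_ (sum_n1_P hA))
  exact ENNReal.tsum_le_tsum fun n => entry_le_n1 _ _ _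

lemma P_succ_right {A : Mat b} (hA : n1 A ≤ ((1/4 : NNReal) : ℝ≥0∞)) (n : ℕ) :
    P A (n + 1) = mul (P A n) A := by
  have hA' : n1 A ≠ ⊤ := ne_top_of_le_ne_top (by simp) hA
  induction n with
  | zero => simp [P, id_mul, mul_id]
  | succ n ih =>
    change mul A (P A (n + 1)) = mul (mul A (P A n)) A
    rw [mul_assoc' hA' (n1_P_ne hA n) hA', ← ih]

lemma S_eq_tail {A : Mat b} (hA : n1 A ≤ ((1/4 : NNReal) : ℝ≥0∞)) (k k' : Fin b → ℤ) :
    S A k k' = mId k k' + ∑' n, P A (n + 1) k k' := by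
  have := (P_summable hA k k').tsum_eq_zero_add
  simpa [P, S] using this

lemma S_left {A : Mat b} (hA : n1 A ≤ ((1/4 : NNReal) : ℝ≥0∞)) : S A = mId + mul A (S A) := by
  have hA' : n1 A ≠ ⊤ := ne_top_of_le_ne_top (by simp) hA
  ext k k'
  rw [S_eq_tail hA]
  simp only [Pi.add_apply]
  congr 1
  have hs : Summable (Function.uncurry fun n j => A k j * P A n j k') := by
    apply summable_of_enorm
    refine ne_top_of_le_ne_top (b := n1 A * 2) (ENNReal.mul_ne_top hA' (by simp)) ?_
    rw [ENNReal.tsum_prod']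
    calc _ ≤ ∑' n, n1 A * n1 (P A n) := ENNReal.tsum_le_tsum fun n => mul_enorm A (P A n) k k'
      _ = n1 A * ∑' n, n1 (P A n) := ENNReal.tsum_mul_left
      _ ≤ _ := by gcongr; exact sum_n1_P hA
  calc ∑' n, P A (n + 1) k k' = ∑' n, ∑' j, A k j * P A n j k' := rfl
    _ = ∑' j, ∑' n, A k j * P A n j k' := hs.tsum_comm.symm
    _ = _ := by
      simp only [mul, S]
      congr 1; ext j; rw [tsum_mul_left]

lemma S_right {A : Mat b} (hA : n1 A ≤ ((1/4 : NNReal) : ℝ≥0∞)) : S A = mId + mul (S A) A := by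
  have hA' : n1 A ≠ ⊤ := ne_top_of_le_ne_top (by simp) hA
  ext k k'
  rw [S_eq_tail hA]
  simp only [Pi.add_apply]
  congr 1
  have hs : Summable (Function.uncurry fun n j => P A n k j * A j k') := by
    apply summable_of_enorm
    refine ne_top_of_le_ne_top (b := 2 * n1 A) (ENNReal.mul_ne_top (by simp) hA') ?_
    rw [ENNReal.tsum_prod']
    calc _ ≤ ∑' n, n1 (P A n) * n1 A := ENNReal.tsum_le_tsum fun n => mul_enorm (P A n) A k k'
      _ = (∑' n, n1 (P A n)) * n1 A := ENNReal.tsum_mul_right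
      _ ≤ _ := by gcongr; exact sum_n1_P hA
  calc ∑' n, P A (n + 1) k k' = ∑' n, ∑' j, P A n k j * A j k' := by
        congr 1; ext n; rw [P_succ_right hA]; rfl
    _ = ∑' j, ∑' n, P A n k j * A j k' := hs.tsum_comm.symm
    _ = _ := by
      simp only [mul, S]
      congr 1; ext j; rw [tsum_mul_right]

lemma isInv {Ψ : Mat b} (h : n1 (-Ψ) ≤ ((1/4 : NNReal) : ℝ≥0∞)) :
    IsMatInverse (mId + Ψ) (S (-Ψ)) := by
  have hI : n1 (mId : Mat b) ≠ ⊤ := ne_top_of_le_ne_top (by simp) n1_id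
  have hΨ : n1 Ψ ≠ ⊤ := by
    rw [← n1_neg]; exact ne_top_of_le_ne_top (by simp) h
  have hS : n1 (S (-Ψ)) ≠ ⊤ := ne_top_of_le_ne_top (by simp) (n1_S h)
  have hΦ : n1 (mId + Ψ) ≠ ⊤ :=
    ne_top_of_le_ne_top (ENNReal.add_ne_top.2 ⟨hI, hΨ⟩) (n1_add _ _)
  refine ⟨fun k k' => (mul_summable hΦ hS k k').norm, fun k k' => (mul_summable hS hΦ k k').norm,
    fun k k' => ?_, fun k k' => ?_⟩
  · have e : mul (mId + Ψ) (S (-Ψ)) = mId := by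
      rw [mul_add_left hI hΨ hS, id_mul]
      have := S_left h
      rw [mul_neg_left] at this
      nth_rewrite 1 [this]
      abel
    exact congrFun (congrFun e k) k'
  · have e : mul (S (-Ψ)) (mId + Ψ) = mId := by
      rw [mul_add_right hS hI hΨ, mul_id]
      have := S_right h
      rw [mul_neg_right] at this
      nth_rewrite 1 [this]
      abel
    exact congrFun (congrFun e k) k'

lemma dn_P {A : Mat b} (hA : n1 A ≤ ((1/4 : NNReal) : ℝ≥0∞)) (s : ℝ) (M : NNReal)
    (hM : ∀ h k : Fin b → ℤ, W s (h + k) ≤ M * W s h + ((3/2 : NNReal) : ℝ≥0∞) * W s k) (n : ℕ) :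
    dn (P A (n + 1)) s ≤ ((4 * (M + 1) : NNReal) : ℝ≥0∞) * dn A s * (2⁻¹ : ℝ≥0∞) ^ n := by
  induction n with
  | zero =>
    simp only [P, mul_id, pow_zero, mul_one]
    refine le_mul_of_one_le_left' ?_
    rw [← ENNReal.coe_one, ENNReal.coe_le_coe, ← NNReal.coe_le_coe]
    push_cast
    nlinarith [M.2]
  | succ n ih =>
    have h2 : (2⁻¹ : ℝ≥0∞) = ((2⁻¹ : NNReal) : ℝ≥0∞) := by simp
    refine (dn_mul s M hM A (P A (n + 1))).trans ?_
    calc _ ≤ (M : ℝ≥0∞) * (dn A s * 2⁻¹ ^ (n + 1)) + ((3/2 : NNReal) : ℝ≥0∞) *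
            (((1/4 : NNReal) : ℝ≥0∞) * (((4 * (M + 1) : NNReal) : ℝ≥0∞) * dn A s * 2⁻¹ ^ n)) := by
          gcongr
          exact n1_P hA (n + 1)
      _ = ((M * 2⁻¹ + 3/2 * (1/4) * (4 * (M + 1)) : NNReal) : ℝ≥0∞) * (dn A s * 2⁻¹ ^ n) := by
          rw [h2, ENNReal.coe_add, ENNReal.coe_mul M, ENNReal.coe_mul (3/2 * (1/4)),
            ENNReal.coe_mul (3/2)]
          generalize ((4 * (M + 1) : NNReal) : ℝ≥0∞) = g
          ring
      _ ≤ ((4 * (M + 1) * 2⁻¹ : NNReal) : ℝ≥0∞) * (dn A s * 2⁻¹ ^ n) := by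
          gcongr
          rw [← NNReal.coe_le_coe]
          push_cast
          nlinarith [M.2]
      _ = _ := by
          rw [h2, ENNReal.coe_mul]
          ring

lemma dn_S_sub {A : Mat b} (hA : n1 A ≤ ((1/4 : NNReal) : ℝ≥0∞)) (s : ℝ) (M : NNReal)
    (hM : ∀ h k : Fin b → ℤ, W s (h + k) ≤ M * W s h + ((3/2 : NNReal) : ℝ≥0∞) * W s k) :
    dn (S A - mId) s ≤ ((8 * (M + 1) : NNReal) : ℝ≥0∞) * dn A s := by
  have e : S A - mId = fun k k' => ∑' n, P A (n + 1) k k' := by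
    ext k k'
    simp [S_eq_tail hA]
  rw [e]
  refine (dn_tsum _ s).trans ((ENNReal.tsum_le_tsum (dn_P hA s M hM)).trans (le_of_eq ?_))
  rw [ENNReal.tsum_mul_left, ENNReal.tsum_geometric_two]
  have : (8 * (M + 1) : NNReal) = 2 * (4 * (M + 1)) := by ring
  rw [this, ENNReal.coe_mul 2]
  push_cast
  ring

lemma dn_S {A : Mat b} (hA : n1 A ≤ ((1/4 : NNReal) : ℝ≥0∞)) (s : ℝ) (M : NNReal)
    (hM : ∀ h k : Fin b → ℤ, W s (h + k) ≤ M * W s h + ((3/2 : NNReal) : ℝ≥0∞) * W s k) :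
    dn (S A) s ≤ 1 + ((8 * (M + 1) : NNReal) : ℝ≥0∞) * dn A s := by
  have e : S A = mId + (S A - mId) := by abel
  rw [e]
  exact (dn_add _ _ s).trans (add_le_add (dn_id s) (dn_S_sub hA s M hM))

lemma S_diff {A B : Mat b} (hA : n1 A ≤ ((1/4 : NNReal) : ℝ≥0∞))
    (hB : n1 B ≤ ((1/4 : NNReal) : ℝ≥0∞)) :
    S B - S A = mul (mul (S B) (B - A)) (S A) := by
  have hA' : n1 A ≠ ⊤ := ne_top_of_le_ne_top (by simp) hA
  have hB' : n1 B ≠ ⊤ := ne_top_of_le_ne_top (by simp) hB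
  have hSA : n1 (S A) ≠ ⊤ := ne_top_of_le_ne_top (by simp) (n1_S hA)
  have hSB : n1 (S B) ≠ ⊤ := ne_top_of_le_ne_top (by simp) (n1_S hB)
  have hnA : n1 (-A) ≠ ⊤ := by rwa [n1_neg]
  have m : ∀ {X Y : Mat b}, n1 X ≠ ⊤ → n1 Y ≠ ⊤ → n1 (mul X Y) ≠ ⊤ := fun hX hY =>
    ne_top_of_le_ne_top (ENNReal.mul_ne_top hX hY) (n1_mul _ _)
  have hI : n1 (mId : Mat b) ≠ ⊤ := ne_top_of_le_ne_top (by simp) n1_id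
  have hnI : n1 (-mId : Mat b) ≠ ⊤ := by rwa [n1_neg]
  rw [sub_eq_add_neg B A, mul_add_right hSB hB' hnA, mul_add_left (m hSB hB') (m hSB hnA) hSA,
    mul_assoc' hSB hnA hSA]
  have h1 : mul (S B) B = S B + -mId := by
    nth_rewrite 2 [S_right hB]; abel
  have h2 : mul A (S A) = S A + -mId := by
    nth_rewrite 2 [S_left hA]; abel
  rw [h1, mul_neg_left A, h2, mul_add_left hSB hnI hSA, mul_neg_left, id_mul, mul_neg_right,
    mul_add_right hSB hSA hnI, mul_neg_right, mul_id]
  abel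

end DN

open DN

theorem stmt7 (b : ℕ) (hb : 1 ≤ b) (s₀ : ℝ) (hs₀ : (b : ℝ) / 2 < s₀) :
    ∃ C₀ : ℝ, 1 ≤ C₀ ∧ ∃ C : ℝ → ℝ, (∀ s, s₀ ≤ s → 0 < C s) ∧
      ∃ inv : ((Fin b → ℤ) → (Fin b → ℤ) → ℂ) → ((Fin b → ℤ) → (Fin b → ℤ) → ℂ),
        (∀ Ψ : (Fin b → ℤ) → (Fin b → ℤ) → ℂ,
          ENNReal.ofReal C₀ * decayNorm Ψ s₀ ≤ 1 / 2 →
          IsMatInverse (fun k k' => mId k k' + Ψ k k') (inv Ψ) ∧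
          decayNorm (inv Ψ) s₀ ≤ 2 ∧
          ∀ s, s₀ ≤ s → decayNorm Ψ s < ⊤ →
            decayNorm (fun k k' => inv Ψ k k' - mId k k') s ≤
              ENNReal.ofReal (C s) * decayNorm Ψ s) ∧
        (∀ Ψ₁ Ψ₂ : (Fin b → ℤ) → (Fin b → ℤ) → ℂ,
          ENNReal.ofReal C₀ * decayNorm Ψ₁ s₀ ≤ 1 / 2 →
          ENNReal.ofReal C₀ * decayNorm Ψ₂ s₀ ≤ 1 / 2 →
          ∀ s, s₀ ≤ s → decayNorm Ψ₁ s < ⊤ → decayNorm Ψ₂ s < ⊤ →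
            decayNorm (fun k k' => inv Ψ₂ k k' - inv Ψ₁ k k') s ≤
              ENNReal.ofReal (C s) *
                (decayNorm (fun k k' => Ψ₂ k k' - Ψ₁ k k') s +
                  (decayNorm Ψ₁ s + decayNorm Ψ₂ s) *
                    decayNorm (fun k k' => Ψ₂ k k' - Ψ₁ k k') s₀)) := by
  simp only [decayNorm_eq]
  obtain ⟨K, hK⟩ := exists_K (b := b) s₀ hs₀
  choose M hM using fun s => W_weight (b := b) s
  have hs0pos : 0 < s₀ := lt_of_le_of_lt (by positivity) hs₀
  set C₀ : NNReal := 1 + 4 * K + 16 * (M s₀ + 1) with hC₀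
  -- smallness consequences
  have small : ∀ Ψ : Mat b, ENNReal.ofReal (C₀ : ℝ) * dn Ψ s₀ ≤ 1 / 2 →
      n1 (-Ψ) ≤ ((1/4 : NNReal) : ℝ≥0∞) ∧
      1 + ((8 * (M s₀ + 1) : NNReal) : ℝ≥0∞) * dn (-Ψ) s₀ ≤ 2 := by
    intro Ψ h
    have hn := n1_le_dn (-Ψ) s₀
    rw [dn_neg, hK] at hn
    rw [dn_neg]
    rw [ENNReal.ofReal_coe_nnreal] at h
    have hfin : dn Ψ s₀ ≠ ⊤ := by
      intro ht
      rw [ht, ENNReal.mul_top (by rw [hC₀]; simp)] at h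
      simp at h
    generalize dn Ψ s₀ = d at *
    lift d to NNReal using hfin
    have e : (1 / 2 : ℝ≥0∞) = ((1/2 : NNReal) : ℝ≥0∞) := by simp
    rw [e, ← ENNReal.coe_mul, ENNReal.coe_le_coe, ← NNReal.coe_le_coe, hC₀] at h
    push_cast at h
    have k1 : (0:ℝ) ≤ K * d := by positivity
    have k2 : (0:ℝ) ≤ M s₀ * d := by positivity
    have k3 : (0:ℝ) ≤ d := by positivity
    constructor
    · refine hn.trans ?_
      rw [← ENNReal.coe_mul, ENNReal.coe_le_coe, ← NNReal.coe_le_coe]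
      push_cast
      nlinarith
    · have e2 : (2 : ℝ≥0∞) = ((2 : NNReal) : ℝ≥0∞) := by simp
      rw [e2, ← ENNReal.coe_one, ← ENNReal.coe_mul, ← ENNReal.coe_add, ENNReal.coe_le_coe,
        ← NNReal.coe_le_coe]
      push_cast
      nlinarith
  let G : ℝ → NNReal := fun s => 8 * (M s + 1)
  let C : ℝ → NNReal := fun s => 1 + G s + (2 * M s * M s * K + 6 * M s + 3 * K) +
    (2 * M s * M s * G s * K + 3 * K * G s)
  refine ⟨C₀, ?_, fun s => (C s : ℝ), fun s _ => ?_, fun Ψ => S (-Ψ), ?_, ?_⟩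
  · have : (1 : NNReal) ≤ C₀ := by rw [hC₀, add_assoc]; exact le_self_add
    exact_mod_cast this
  · have : (0 : NNReal) < C s := by positivity
    exact_mod_cast this
  · intro Ψ h
    obtain ⟨h1, h2⟩ := small Ψ h
    refine ⟨isInv h1, (dn_S h1 s₀ _ (hM s₀ hs0pos)).trans h2, fun s hs _ => ?_⟩
    refine (dn_S_sub h1 s _ (hM s (hs0pos.trans_le hs))).trans ?_
    rw [dn_neg, ENNReal.ofReal_coe_nnreal]
    gcongr
    change G s ≤ C s
    calc G s ≤ 1 + G s := le_add_self
      _ ≤ _ := le_self_add.trans le_self_add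
  · intro Ψ₁ Ψ₂ h1 h2 s hs _ _
    obtain ⟨h1, -⟩ := small Ψ₁ h1
    obtain ⟨h2, -⟩ := small Ψ₂ h2
    have hMs := hM s (hs0pos.trans_le hs)
    have hd : dn (S (-Ψ₂) - S (-Ψ₁)) s ≤ _ := (S_diff h1 h2) ▸
      dn_mul s _ hMs (mul (S (-Ψ₂)) (-Ψ₂ - -Ψ₁)) (S (-Ψ₁))
    have eD : -Ψ₂ - -Ψ₁ = -(Ψ₂ - Ψ₁) := by abel
    rw [eD] at hd
    have hm := dn_mul s _ hMs (S (-Ψ₂)) (-(Ψ₂ - Ψ₁))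
    have hm1 := n1_mul (S (-Ψ₂)) (-(Ψ₂ - Ψ₁))
    have hD := n1_le_dn (-(Ψ₂ - Ψ₁)) s₀
    rw [hK] at hD
    have hmono := dn_mono (Ψ₂ - Ψ₁) hs
    have g1 := dn_S h1 s _ hMs
    have g2 := dn_S h2 s _ hMs
    have f1 := n1_S h1
    have f2 := n1_S h2
    rw [dn_neg] at hm hD g1 g2
    change dn (S (-Ψ₂) - S (-Ψ₁)) s ≤ ENNReal.ofReal (C s : ℝ) *
      (dn (Ψ₂ - Ψ₁) s + (dn Ψ₁ s + dn Ψ₂ s) * dn (Ψ₂ - Ψ₁) s₀)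
    rw [ENNReal.ofReal_coe_nnreal]
    change _ ≤ 1 + (G s : ℝ≥0∞) * _ at g1
    change _ ≤ 1 + (G s : ℝ≥0∞) * _ at g2
    have hC : (C s : ℝ≥0∞) = 1 + G s + (2 * M s * M s * K + 6 * M s + 3 * K) +
        (2 * M s * M s * G s * K + 3 * K * G s) := by
      simp only [C]; push_cast; rfl
    rw [hC]
    have c3 : ((3/2 : NNReal) : ℝ≥0∞) * 2 = 3 := by
      have : ((3/2 * 2 : NNReal) : ℝ≥0∞) = 3 := by norm_num
      rwa [ENNReal.coe_mul] at this
    generalize (G s : ℝ≥0∞) = g at *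
    generalize (M s : ℝ≥0∞) = m at *
    generalize (K : ℝ≥0∞) = κ at *
    generalize ((3/2 : NNReal) : ℝ≥0∞) = c at *
    generalize dn (Ψ₂ - Ψ₁) s = ds at *
    generalize dn (Ψ₂ - Ψ₁) s₀ = d0 at *
    generalize dn Ψ₁ s = p₁ at *
    generalize dn Ψ₂ s = p₂ at *
    refine hd.trans ?_
    calc _ ≤ m * ((m * ((1 + g * p₂) * (κ * d0)) + c * (2 * ds)) * 2) +
          c * ((2 * (κ * d0)) * (1 + g * p₁)) := by
          gcongr
          · refine hm.trans ?_
            gcongr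
          · refine hm1.trans ?_
            gcongr
      _ = (2 * m * m * κ + (c * 2) * κ) * d0 + 2 * (c * 2) * m * ds +
          2 * m * m * g * κ * p₂ * d0 + (c * 2) * κ * g * p₁ * d0 := by ring
      _ = (2 * m * m * κ + 3 * κ) * d0 + 6 * m * ds +
          2 * m * m * g * κ * p₂ * d0 + 3 * κ * g * p₁ * d0 := by rw [c3]; ring
      _ ≤ (2 * m * m * κ + 3 * κ) * ds + 6 * m * ds +
          2 * m * m * g * κ * p₂ * d0 + 3 * κ * g * p₁ * d0 := by gcongr
      _ ≤ ((2 * m * m * κ + 3 * κ) * ds + 6 * m * ds +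
          2 * m * m * g * κ * p₂ * d0 + 3 * κ * g * p₁ * d0) +
          ((1 + g) * (ds + (p₁ + p₂) * d0) +
            (2 * m * m * κ + 6 * m + 3 * κ) * ((p₁ + p₂) * d0) +
            (2 * m * m * g * κ + 3 * κ * g) * ds + 2 * m * m * g * κ * p₁ * d0 +
            3 * κ * g * p₂ * d0) := le_self_add
      _ = _ := by ring
end

section
/- Let d ≥ 1 and let p : ℝᵈ → ℝᵈ be 2π-periodic in each variable and Lipschitz (with respect to the sup-norm on ℝᵈ) with Lipschitz constant L ≤ 1/2. Then the map f(x) := x + p(x) is a bijection of ℝᵈ, its inverse has the form f^{−1}(y) = y + q(y) where q : ℝᵈ → ℝᵈ is 2π-periodic in each variable and Lipschitz, and one has sup_{y} |q(y)| = sup_{x} |p(x)| and the Lipschitz constant of q is at most 2L. -/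
theorem stmt13 (d : ℕ) (hd : 1 ≤ d) (p : (Fin d → ℝ) → (Fin d → ℝ)) (L : NNReal)
    (hLip : LipschitzWith L p) (hL : (L : ℝ) ≤ 1 / 2)
    (hper : ∀ (x : Fin d → ℝ) (k : Fin d → ℤ),
      p (x + fun i => 2 * Real.pi * (k i : ℝ)) = p x) :
    Function.Bijective (fun x => x + p x) ∧
    ∃ q : (Fin d → ℝ) → (Fin d → ℝ),
      (∀ (y : Fin d → ℝ) (k : Fin d → ℤ),
        q (y + fun i => 2 * Real.pi * (k i : ℝ)) = q y) ∧
      LipschitzWith (2 * L) q ∧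
      (∀ y : Fin d → ℝ, (fun x => x + p x) (y + q y) = y) ∧
      (⨆ y : Fin d → ℝ, ‖q y‖) = ⨆ x : Fin d → ℝ, ‖p x‖ := by
  have hd1 : ∀ x y, ‖p x - p y‖ ≤ L * ‖x - y‖ := fun x y => hLip.norm_sub_le x y
  have hexp : ∀ x y, ‖x - y‖ ≤ 2 * ‖(x + p x) - (y + p y)‖ := by
    intro x y
    have h1 : ‖x - y‖ ≤ ‖(x + p x) - (y + p y)‖ + ‖p x - p y‖ := by
      have : x - y = ((x + p x) - (y + p y)) - (p x - p y) := by abel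
      calc ‖x - y‖ = ‖((x + p x) - (y + p y)) - (p x - p y)‖ := by rw [← this]
        _ ≤ _ := norm_sub_le _ _
    have h2 := hd1 x y
    have h3 : (L : ℝ) * ‖x - y‖ ≤ 1 / 2 * ‖x - y‖ :=
      mul_le_mul_of_nonneg_right hL (norm_nonneg _)
    linarith
  have hinj : Function.Injective (fun x => x + p x) := by
    intro x y hxy
    have h := hexp x y
    have hxy' : x + p x = y + p y := hxy
    rw [hxy', sub_self, norm_zero, mul_zero] at h
    exact sub_eq_zero.mp (norm_le_zero_iff.mp h)
  have hsurj : Function.Surjective (fun x => x + p x) := by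
    intro y
    have hc : ContractingWith L (fun x => y - p x) := by
      refine ⟨?_, ?_⟩
      · have : (L : ℝ) < 1 := by linarith
        exact_mod_cast this
      · refine LipschitzWith.of_dist_le_mul fun a b => ?_
        rw [dist_sub_left]
        exact hLip.dist_le_mul a b
    refine ⟨hc.fixedPoint _, ?_⟩
    have h : y - p (hc.fixedPoint _) = hc.fixedPoint _ := hc.fixedPoint_isFixedPt
    exact (sub_eq_iff_eq_add.mp h).symm
  refine ⟨⟨hinj, hsurj⟩, ?_⟩
  obtain ⟨g, hg⟩ := hsurj.hasRightInverse
  have hg' : ∀ y, g y + p (g y) = y := hg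
  have hgs : Function.Surjective g := fun x => ⟨x + p x, hinj (hg _)⟩
  have hq : ∀ y, y + -p (g y) = g y := by
    intro y
    have := hg' y
    rw [← sub_eq_add_neg, sub_eq_iff_eq_add]
    exact this.symm
  refine ⟨fun y => -p (g y), ?_, ?_, ?_, ?_⟩
  · intro y k
    have : g (y + fun i => 2 * Real.pi * (k i : ℝ)) = g y + fun i => 2 * Real.pi * (k i : ℝ) := by
      apply hinj
      simp only [hg', hper]
      rw [add_right_comm, hg']
    simp only [this, hper]
  · refine LipschitzWith.of_dist_le_mul fun a b => ?_
    rw [dist_neg_neg, dist_eq_norm, dist_eq_norm]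
    have h1 := hd1 (g a) (g b)
    have h2 := hexp (g a) (g b)
    rw [hg', hg'] at h2
    have h3 := mul_le_mul_of_nonneg_left h2 L.coe_nonneg
    push_cast
    linarith
  · intro y
    simp only [hq, hg']
  · simp only [norm_neg]
    exact hgs.iSup_comp (fun x => ‖p x‖)
end
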